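/- (Generalized hypothesis testing, Section 6) Theorem 2.1 remains valid when the alternative hypotheses are arbitrary nonnegative σ-finite measures: for each n ≥ 1 let P_n be a probability measure and G_n a σ-finite nonnegative measure on a measurable space Ω_n, define for a measurable acceptance region A_n ⊆ Ω_n the quantities μ_n = P_n(Ω_n \ A_n) and λ_n = G_n(A_n), set Z_n = (1/n) log (dP_n/dG_n) (Radon–Nikodym derivative, equal to +∞ on the P_n-singular part), and define η(R) = liminf_{n→∞} −(1/n) log P_n{Z_n ≤ R}. Then for every r > 0, the supremum B_e(r) of all real E for which there exist measurable sets A_n with liminf_{n→∞} −(1/n) log μ_n ≥ r and liminf_{n→∞} −(1/n) log λ_n ≥ E satisfies B_e(r) = inf{ R + η(R) : R ∈ ℝ, η(R) < r }, where the infimum of the empty set is +∞. -/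

import Mathlib

open MeasureTheory Filter
open scoped ENNReal NNReal

/-- The exponent `-(1/n) log p` of a nonneg extended real `p`, valued in `EReal`,
with the conventions `-log 0 = +∞` and `-log ∞ = -∞`. -/
noncomputable def expRate (n : ℕ) (p : ℝ≥0∞) : EReal :=
  (((n : ℝ)⁻¹ : ℝ) : EReal) * (-(ENNReal.log p))

/-- The likelihood ratio `dμ/dν`, defined to be `+∞` on the part of the space where
`μ` is singular with respect to `ν` (μ-a.e.). -/
noncomputable def lratio {Ω : Type*} [MeasurableSpace Ω] (μ ν : Measure Ω) (x : Ω) : ℝ≥0∞ :=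
  μ.rnDeriv (μ + ν) x / ν.rnDeriv (μ + ν) x

section Setup

variable {Ω : ℕ → Type*} [∀ n, MeasurableSpace (Ω n)]

/-- `η(R) = liminf_n -(1/n) log P_n{ (1/n) log dP_n/dQ_n ≤ R }`. -/
noncomputable def eta (P Q : ∀ n, Measure (Ω n)) (R : ℝ) : EReal :=
  Filter.atTop.liminf fun n =>
    expRate n ((P n) {x | lratio (P n) (Q n) x ≤ ENNReal.ofReal (Real.exp (n * R))})

/-- `E` is `r`-achievable: there are measurable acceptance regions `A n` with
`liminf -(1/n) log μ_n ≥ r` and `liminf -(1/n) log λ_n ≥ E`. -/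
def rAchievable (P Q : ∀ n, Measure (Ω n)) (r E : ℝ) : Prop :=
  ∃ A : ∀ n, Set (Ω n), (∀ n, MeasurableSet (A n)) ∧
    (r : EReal) ≤ Filter.atTop.liminf (fun n => expRate n ((P n) (A n)ᶜ)) ∧
    (E : EReal) ≤ Filter.atTop.liminf (fun n => expRate n ((Q n) (A n)))

/-- The optimal error exponent `B_e(r)`: the supremum of all `r`-achievable `E`. -/
noncomputable def Be (P Q : ∀ n, Measure (Ω n)) (r : ℝ) : EReal :=
  sSup {x : EReal | ∃ E : ℝ, rAchievable P Q r E ∧ x = (E : EReal)}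

end Setup

lemma le_expRate_iff (n : ℕ) (hn : 0 < n) (p : ℝ≥0∞) (e : ℝ) :
    (e : EReal) ≤ expRate n p ↔ p ≤ ENNReal.ofReal (Real.exp (-(n * e))) := by
  have hn' : (0 : ℝ) < n := by exact_mod_cast hn
  have key : p ≤ ENNReal.ofReal (Real.exp (-(n * e))) ↔
      ENNReal.log p ≤ ((-(n * e) : ℝ) : EReal) := by
    rw [← ENNReal.log_le_log_iff, ENNReal.log_ofReal_of_pos (Real.exp_pos _), Real.log_exp]
  rw [key, expRate]
  have hpos : (0 : ℝ) < (n : ℝ)⁻¹ := inv_pos.mpr hn'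
  induction ENNReal.log p with
  | bot => simp [EReal.coe_mul_top_of_pos hpos]
  | top => simp [EReal.coe_mul_bot_of_pos hpos, -EReal.coe_neg, -EReal.coe_mul]
  | coe x =>
    norm_cast
    rw [inv_mul_eq_div, le_div_iff₀ hn']
    constructor <;> intro h <;> linarith

lemma le_liminf_rate_iff (p : ℕ → ℝ≥0∞) (E : ℝ) :
    (E : EReal) ≤ atTop.liminf (fun n => expRate n (p n)) ↔
      ∀ e < E, ∀ᶠ n : ℕ in atTop, p n ≤ ENNReal.ofReal (Real.exp (-(n * e))) := by
  rw [Filter.le_liminf_iff]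
  constructor
  · intro h e he
    filter_upwards [h e (by exact_mod_cast he), eventually_gt_atTop 0] with n h1 h2
    exact (le_expRate_iff n h2 _ _).1 h1.le
  · intro h y hy
    obtain ⟨e, h1, h2⟩ := EReal.lt_iff_exists_real_btwn.1 hy
    filter_upwards [h e (by exact_mod_cast h2), eventually_gt_atTop 0] with n h3 h4
    exact h1.trans_le ((le_expRate_iff n h4 _ _).2 h3)

lemma rate_add (p q s : ℕ → ℝ≥0∞) (E : ℝ)
    (hs : ∀ n, s n ≤ p n + q n)
    (hp : ∀ e < E, ∀ᶠ n : ℕ in atTop, p n ≤ ENNReal.ofReal (Real.exp (-(n * e))))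
    (hq : ∀ e < E, ∀ᶠ n : ℕ in atTop, q n ≤ ENNReal.ofReal (Real.exp (-(n * e)))) :
    ∀ e < E, ∀ᶠ n : ℕ in atTop, s n ≤ ENNReal.ofReal (Real.exp (-(n * e))) := by
  intro e he
  obtain ⟨e', h1, h2⟩ := exists_between he
  obtain ⟨N, hN⟩ := exists_nat_gt (Real.log 2 / (e' - e))
  filter_upwards [hp e' h2, hq e' h2, eventually_ge_atTop N] with n a b c
  refine (hs n).trans ((add_le_add a b).trans ?_)
  rw [← ENNReal.ofReal_add (Real.exp_pos _).le (Real.exp_pos _).le]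
  apply ENNReal.ofReal_le_ofReal
  have hd : 0 < e' - e := by linarith
  rw [div_lt_iff₀ hd] at hN
  have hc : (N : ℝ) ≤ n := by exact_mod_cast c
  have h3 : Real.log 2 ≤ n * (e' - e) := hN.le.trans (by gcongr)
  have h4 : Real.exp (-(n * e)) = Real.exp (n * (e' - e)) * Real.exp (-(n * e')) := by
    rw [← Real.exp_add]; ring_nf
  have h5 : 2 ≤ Real.exp (n * (e' - e)) := by
    rw [← Real.exp_log (show (0 : ℝ) < 2 by norm_num)]
    exact Real.exp_le_exp.2 h3
  rw [h4]
  nlinarith [Real.exp_pos (-(n * e'))]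

section
variable {X : Type*} [MeasurableSpace X] (μ ν : Measure X) [SigmaFinite μ] [SigmaFinite ν]

lemma measurable_lratio : Measurable (lratio μ ν) :=
  (Measure.measurable_rnDeriv _ _).div (Measure.measurable_rnDeriv _ _)

lemma eq_lint_left (B : Set X) :
    μ B = ∫⁻ x in B, μ.rnDeriv (μ + ν) x ∂(μ + ν) := by
  have h : μ ≪ μ + ν := Measure.AbsolutelyContinuous.rfl.add_right ν
  exact (Measure.setLIntegral_rnDeriv h B).symm

lemma eq_lint_right (B : Set X) :
    ν B = ∫⁻ x in B, ν.rnDeriv (μ + ν) x ∂(μ + ν) := by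
  have h : ν ≪ μ + ν := by
    rw [add_comm]; exact Measure.AbsolutelyContinuous.rfl.add_right μ
  exact (Measure.setLIntegral_rnDeriv h B).symm

lemma measure_le_of_lratio_le {c : ℝ≥0∞} (hc0 : c ≠ 0) (hc : c ≠ ∞) (B : Set X)
    (hB : MeasurableSet B) (h : ∀ x ∈ B, lratio μ ν x ≤ c) : μ B ≤ c * ν B := by
  rw [eq_lint_left μ ν B, eq_lint_right μ ν B,
    ← lintegral_const_mul _ (Measure.measurable_rnDeriv _ _)]
  refine setLIntegral_mono ((Measure.measurable_rnDeriv _ _).const_mul _) fun x hx => ?_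
  have := h x hx
  unfold lratio at this
  exact (ENNReal.div_le_iff_le_mul (Or.inr hc) (Or.inr hc0)).1 this

lemma measure_le_of_lt_lratio {c : ℝ≥0∞} (B : Set X)
    (hB : MeasurableSet B) (h : ∀ x ∈ B, c < lratio μ ν x) : c * ν B ≤ μ B := by
  rw [eq_lint_left μ ν B, eq_lint_right μ ν B,
    ← lintegral_const_mul _ (Measure.measurable_rnDeriv _ _)]
  refine setLIntegral_mono (Measure.measurable_rnDeriv _ _) fun x hx => ?_
  have := h x hx
  unfold lratio at this
  exact ENNReal.mul_le_of_le_div this.le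
end

lemma exp_mul_exp (a b : ℝ) : ENNReal.ofReal (Real.exp a) * ENNReal.ofReal (Real.exp b)
    = ENNReal.ofReal (Real.exp (a + b)) := by
  rw [← ENNReal.ofReal_mul (Real.exp_pos _).le, Real.exp_add]

lemma le_exp_neg_mul {a : ℝ} {g m : ℝ≥0∞} (h : ENNReal.ofReal (Real.exp a) * g ≤ m) :
    g ≤ ENNReal.ofReal (Real.exp (-a)) * m := by
  calc g = ENNReal.ofReal (Real.exp (-a)) * (ENNReal.ofReal (Real.exp a) * g) := by
        rw [← mul_assoc, exp_mul_exp]; simp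
    _ ≤ _ := by gcongr

/-- Generalized hypothesis testing (Section 6): Theorem 2.1 remains valid when the
alternative hypotheses are arbitrary σ-finite nonnegative measures `G n`. -/
theorem han_generalized_theorem_2_1 {Ω : ℕ → Type*} [∀ n, MeasurableSpace (Ω n)]
    (P G : ∀ n, Measure (Ω n)) [∀ n, IsProbabilityMeasure (P n)]
    [∀ n, SigmaFinite (G n)] (r : ℝ) (hr : 0 < r) :
    Be P G r =
      sInf {x : EReal | ∃ R : ℝ, eta P G R < (r : EReal) ∧ x = (R : EReal) + eta P G R} := by
  have ofne : ∀ a : ℝ, ENNReal.ofReal (Real.exp a) ≠ 0 := fun a => by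
    simp [Real.exp_pos]
  apply le_antisymm
  · -- converse part
    apply sSup_le
    rintro _ ⟨E, ⟨A, hA, h1, h2⟩, rfl⟩
    apply le_sInf
    rintro _ ⟨R, hR, rfl⟩
    rw [le_liminf_rate_iff] at h1 h2
    have hm : ((min (E - R) r : ℝ) : EReal) ≤ eta P G R := by
      unfold eta
      rw [le_liminf_rate_iff]
      refine rate_add (fun n => ENNReal.ofReal (Real.exp (n * R)) * G n (A n))
        (fun n => P n (A n)ᶜ) _ _ ?_ ?_ ?_
      · intro n
        set S := {x | lratio (P n) (G n) x ≤ ENNReal.ofReal (Real.exp (n * R))} with hS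
        have hSm : MeasurableSet S :=
          measurableSet_le (measurable_lratio _ _) measurable_const
        calc P n S ≤ P n ((S ∩ A n) ∪ (A n)ᶜ) := by
              apply measure_mono
              intro x hx
              by_cases hxA : x ∈ A n
              · exact Or.inl ⟨hx, hxA⟩
              · exact Or.inr hxA
          _ ≤ P n (S ∩ A n) + P n (A n)ᶜ := measure_union_le _ _
          _ ≤ _ := by
              gcongr
              refine (measure_le_of_lratio_le (P n) (G n) (ofne _) ENNReal.ofReal_ne_top
                (S ∩ A n) (hSm.inter (hA n)) fun x hx => hx.1).trans ?_
              gcongr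
              exact Set.inter_subset_right
      · intro e he
        have : e + R < E := by have := he.trans_le (min_le_left _ _); linarith
        filter_upwards [h2 _ this] with n hn
        refine (mul_le_mul_right hn _).trans ?_
        rw [exp_mul_exp]
        apply le_of_eq
        ring_nf
      · intro e he
        exact h1 e (he.trans_le (min_le_right _ _))
    have hle : E - R ≤ r := by
      by_contra hcon
      rw [min_eq_right (by linarith)] at hm
      exact absurd hR (not_lt.2 hm)
    rw [min_eq_left hle] at hm
    calc (E : EReal) = ((R + (E - R) : ℝ) : EReal) := by norm_num
      _ = (R : EReal) + ((E - R : ℝ) : EReal) := EReal.coe_add _ _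
      _ ≤ _ := by gcongr
  · -- direct part
    refine le_of_forall_lt fun y hy => ?_
    obtain ⟨E, hyE, hE⟩ := EReal.lt_iff_exists_real_btwn.1 hy
    refine hyE.trans_le (le_sSup ⟨E, ?_, rfl⟩)
    obtain ⟨E', hEE', hE'⟩ := EReal.lt_iff_exists_real_btwn.1 hE
    have hEE : E < E' := by exact_mod_cast hEE'
    have key : ∀ R : ℝ, eta P G R < r → ((E' - R : ℝ) : EReal) ≤ eta P G R := by
      intro R hR
      have h := hE'.le.trans (sInf_le ⟨R, hR, rfl⟩)
      rw [EReal.coe_sub]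
      exact EReal.sub_le_of_le_add' h
    let T : ∀ (n : ℕ) (R : ℝ), Set (Ω n) := fun n R =>
      {x | ENNReal.ofReal (Real.exp (n * R)) < lratio (P n) (G n) x}
    have hTm : ∀ n R, MeasurableSet (T n R) := fun n R =>
      measurableSet_lt measurable_const (measurable_lratio _ _)
    let Good : ℝ → Prop := fun R => ∀ e < E, ∀ᶠ n : ℕ in atTop,
      G n (T n R) ≤ ENNReal.ofReal (Real.exp (-(n * e)))
    suffices hex : ∃ R, Good R ∧ (r : EReal) ≤ eta P G R by
      obtain ⟨R, hg, hη⟩ := hex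
      refine ⟨fun n => T n R, fun n => hTm n R, ?_, (le_liminf_rate_iff _ _).2 hg⟩
      have : ∀ n, (T n R)ᶜ = {x | lratio (P n) (G n) x ≤ ENNReal.ofReal (Real.exp (n * R))} := by
        intro n; ext x; simp [T]
      simp only [this]
      exact hη
    by_contra hcon
    push Not at hcon
    have base : Good E := by
      intro e he
      refine Eventually.of_forall fun n => ?_
      have h := le_exp_neg_mul
        (measure_le_of_lt_lratio (P n) (G n) (T n E) (hTm n E) fun x hx => hx)
      refine h.trans ((mul_le_mul_right prob_le_one _).trans ?_)
      rw [mul_one]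
      gcongr
    have step : ∀ R, Good R → Good (R - (E' - E)) := by
      intro R hg
      have h1 := key R (hcon R hg)
      unfold eta at h1
      rw [le_liminf_rate_iff] at h1
      let R' := R - (E' - E)
      let S : ∀ n, Set (Ω n) := fun n =>
        {x | lratio (P n) (G n) x ≤ ENNReal.ofReal (Real.exp (n * R))}
      have hSm : ∀ n, MeasurableSet (S n) := fun n =>
        measurableSet_le (measurable_lratio _ _) measurable_const
      refine rate_add (fun n => G n (T n R' ∩ S n)) (fun n => G n (T n R)) _ _ ?_ ?_ hg
      · intro n
        refine (measure_mono ?_).trans (measure_union_le _ _)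
        intro x hx
        by_cases hxS : x ∈ S n
        · exact Or.inl ⟨hx, hxS⟩
        · right
          simpa [S, T] using hxS
      · intro e he
        filter_upwards [h1 (e - R') (by simp only [R']; linarith)] with n hn
        have h := le_exp_neg_mul
          (measure_le_of_lt_lratio (P n) (G n) (T n R' ∩ S n) ((hTm n R').inter (hSm n))
            fun x hx => hx.1)
        have h' : P n (T n R' ∩ S n) ≤ _ := (measure_mono Set.inter_subset_right).trans hn
        refine h.trans ((mul_le_mul_right h' _).trans ?_)
        rw [exp_mul_exp]
        apply le_of_eq
        ring_nf
    have all : ∀ k : ℕ, Good (E - k * (E' - E)) := by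
      intro k
      induction k with
      | zero => simpa using base
      | succ k ih =>
        have := step _ ih
        convert this using 1
        push_cast; ring
    obtain ⟨k, hk⟩ := exists_nat_gt ((E - E' + r) / (E' - E))
    rw [div_lt_iff₀ (by linarith)] at hk
    have h1 := hcon _ (all k)
    have h2 := (key _ h1).trans_lt h1
    have h3 : E' - (E - k * (E' - E)) < r := by exact_mod_cast h2
    linarith
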